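/- The derivation module D(𝒜₉₃) of the central hyperplane arrangement 𝒜₉₃ in ℂ⁴ with defining equation Q₉₃ = x·y·z·w·(x+y)·(x−y+z)·(y−z−w)·(x+z−w) is not a free module over S = ℂ[x,y,z,w]. -/

import Mathlib

open MvPolynomial

noncomputable section

/-- The polynomial ring `S = ℂ[x,y,z,w]`, with `x = X 0`, `y = X 1`, `z = X 2`, `w = X 3`. -/
abbrev S4 : Type := MvPolynomial (Fin 4) ℂ

/-- The linear form `c₀·x + c₁·y + c₂·z + c₃·w` with coefficient vector `c`. -/
noncomputable def linForm (c : Fin 4 → ℂ) : S4 := ∑ i, C (c i) * X i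

/-- A polynomial derivation `θ = a₁∂ₓ + a₂∂_y + a₃∂_z + a₄∂_w` of `S` is identified with
its coefficient tuple `a : Fin 4 → S`; the linear map `derMap f` sends `a` to `θ(f)`. -/
noncomputable def derMap (f : S4) : (Fin 4 → S4) →ₗ[S4] S4 where
  toFun a := ∑ i, a i * pderiv i f
  map_add' a b := by simp [add_mul, Finset.sum_add_distrib]
  map_smul' c a := by simp [Finset.mul_sum, mul_assoc]

/-- The derivation module `D(𝒜)` of the central arrangement whose hyperplanes are the kernels
of the linear forms `linForm (α H)`: all derivations `θ` with `θ(α_H) ∈ S·α_H` for every `H`. -/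
noncomputable def derivModule {ι : Type} (α : ι → (Fin 4 → ℂ)) :
    Submodule S4 (Fin 4 → S4) :=
  ⨅ H, Submodule.comap (derMap (linForm (α H))) (Ideal.span {linForm (α H)})

end

/-- The coefficient vectors of the eight linear factors of Q = xyzw(x+y)(x-y+z)(y-z-w)(x+z-w), defining the rigid Cynk–Szemberg octic arrangement 𝒜₉₃ ⊂ ℙ³. -/
noncomputable def A93 : Fin 8 → (Fin 4 → ℂ) :=
  ![![1, 0, 0, 0],
    ![0, 1, 0, 0],
    ![0, 0, 1, 0],
    ![0, 0, 0, 1],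
    ![1, 1, 0, 0],
    ![1, -1, 1, 0],
    ![0, 1, -1, -1],
    ![1, 0, 1, -1]]

theorem linForm_ne_zero {c : Fin 4 → ℂ} (hc : c ≠ 0) : linForm c ≠ 0 := by
  intro h
  apply hc
  funext j
  have h' := congrArg (fun f => eval (Pi.single j 1) f) h
  simpa [linForm, Pi.single_apply] using h'

theorem derMap_linForm (c : Fin 4 → ℂ) (θ : Fin 4 → S4) :
    derMap (linForm c) θ = ∑ i, C (c i) * θ i := by
  simp [derMap, linForm, pderiv_X, Pi.single_apply, mul_comm]

theorem mem_derivModule_of_eq_mul {ι : Type} {α : ι → Fin 4 → ℂ} {θ : Fin 4 → S4} (g : ι → S4)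
    (h : ∀ H, derMap (linForm (α H)) θ = g H * linForm (α H)) : θ ∈ derivModule α := by
  simp only [derivModule, Submodule.mem_iInf, Submodule.mem_comap]
  exact fun H => Ideal.mem_span_singleton'.2 ⟨g H, (h H).symm⟩

theorem derMap_mem_span {ι : Type} {α : ι → Fin 4 → ℂ} (H : ι) (θ : derivModule α) :
    derMap (linForm (α H)) θ ∈ Submodule.span S4 {linForm (α H)} := by
  have h := θ.2
  simp only [derivModule, Submodule.mem_iInf, Submodule.mem_comap] at h
  exact h H

/-- The map `θ ↦ θ(α_H) / α_H` on the derivation module. -/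
noncomputable def quotMap {ι : Type} {α : ι → Fin 4 → ℂ} (H : ι) (hH : α H ≠ 0) :
    derivModule α →ₗ[S4] S4 :=
  (LinearEquiv.toSpanNonzeroSingleton S4 S4 _ (linForm_ne_zero hH)).symm.toLinearMap ∘ₗ
    (derMap (linForm (α H)) ∘ₗ (derivModule α).subtype).codRestrict _ (derMap_mem_span H)

theorem quotMap_mul {ι : Type} {α : ι → Fin 4 → ℂ} (H : ι) (hH : α H ≠ 0) (θ : derivModule α) :
    quotMap H hH θ * linForm (α H) = derMap (linForm (α H)) θ := by
  have h := congrArg Subtype.val ((LinearEquiv.toSpanNonzeroSingleton S4 S4 _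
    (linForm_ne_zero hH)).apply_symm_apply ⟨_, derMap_mem_span H θ⟩)
  rw [LinearEquiv.toSpanNonzeroSingleton_apply] at h
  exact h

theorem quotMap_eq_of_eq_mul {ι : Type} {α : ι → Fin 4 → ℂ} {H : ι} (hH : α H ≠ 0)
    {θ : derivModule α} {g : S4} (h : derMap (linForm (α H)) θ = g * linForm (α H)) :
    quotMap H hH θ = g :=
  mul_right_cancel₀ (linForm_ne_zero hH) ((quotMap_mul H hH θ).trans h)

/-- A free submodule of `S⁴` admits no semilinear map to a vector space whose values include
five linearly independent vectors. -/
theorem not_free_of_linearIndependent {M : Submodule S4 (Fin 4 → S4)} {V : Type*}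
    [AddCommGroup V] [Module ℂ V] {σ : S4 →+* ℂ} (φ : M →ₛₗ[σ] V) (θ : Fin 5 → M)
    (hθ : LinearIndependent ℂ (φ ∘ θ)) : ¬ Module.Free S4 M := by
  intro hM
  let b := Module.Free.chooseBasis S4 M
  have hb : LinearIndependent S4 (M.subtype ∘ b) :=
    b.linearIndependent.map' _ (Submodule.ker_subtype M)
  have : Finite (Module.Free.ChooseBasisIndex S4 M) := hb.finite
  have := Fintype.ofFinite (Module.Free.ChooseBasisIndex S4 M)
  have hcard := hb.fintype_card_le_finrank
  rw [Module.finrank_fin_fun] at hcard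
  have hspan : Set.range (φ ∘ θ) ≤ Submodule.span ℂ (Set.range (φ ∘ b)) := by
    rintro _ ⟨j, rfl⟩
    rw [Function.comp_apply, ← b.sum_repr (θ j), map_sum]
    refine Submodule.sum_mem _ fun i _ => ?_
    rw [map_smulₛₗ]
    exact Submodule.smul_mem _ _ (Submodule.subset_span ⟨i, rfl⟩)
  have := Fintype.ofFinite (Set.range (φ ∘ b))
  have h5 := linearIndependent_le_span_aux' (φ ∘ θ) hθ (Set.range (φ ∘ b)) hspan
  have h4 := Fintype.card_range_le (φ ∘ b)
  simp only [Fintype.card_fin] at h5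
  omega

theorem A93_ne_zero (H : Fin 8) : A93 H ≠ 0 := by
  intro h
  have h0 := congrFun h 0
  have h1 := congrFun h 1
  have h2 := congrFun h 2
  have h3 := congrFun h 3
  fin_cases H <;> simp [A93] at h0 h1 h2 h3

/-- The quotient `θ(α_H) / α_H` for `θ ∈ D(𝒜₉₃)`. -/
noncomputable def quotA93 (H : Fin 8) : derivModule A93 →ₗ[S4] S4 := quotMap H (A93_ne_zero H)

/-- The point of `ℂ⁴` spanning the intersection of the hyperplanes `z = 0`, `x - y + z = 0`,
`y - z - w = 0` and `x + z - w = 0`; these are in general position there. -/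
def basePoint : Fin 4 → ℂ := ![1, 1, 0, 1]

theorem quotA93_mul (H : Fin 8) (θ : derivModule A93) :
    quotA93 H θ * linForm (A93 H) = derMap (linForm (A93 H)) θ :=
  quotMap_mul H (A93_ne_zero H) θ

theorem quotA93_circuit (θ : derivModule A93) :
    X 2 * (quotA93 2 θ - quotA93 7 θ) + (X 0 - X 1 + X 2) * (quotA93 5 θ - quotA93 7 θ)
      + (X 1 - X 2 - X 3) * (quotA93 6 θ - quotA93 7 θ) = 0 := by
  have h2 := quotA93_mul 2 θ
  have h5 := quotA93_mul 5 θ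
  have h6 := quotA93_mul 6 θ
  have h7 := quotA93_mul 7 θ
  simp only [derMap_linForm] at h2 h5 h6 h7
  simp [linForm, A93, Fin.sum_univ_four] at h2 h5 h6 h7
  linear_combination h2 + h5 + h6 - h7

theorem eval_quotA93_sub (θ : derivModule A93) :
    eval basePoint (quotA93 2 θ - quotA93 7 θ) = 0 ∧
      eval basePoint (quotA93 5 θ - quotA93 7 θ) = 0 := by
  have h := quotA93_circuit θ
  have h0 := congrArg (fun f => eval basePoint (pderiv 0 f)) h
  have h1 := congrArg (fun f => eval basePoint (pderiv 1 f)) h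
  have h2 := congrArg (fun f => eval basePoint (pderiv 2 f)) h
  simp [pderiv_X, basePoint] at h0 h1 h2
  simp only [map_sub, basePoint]
  exact ⟨by linear_combination h2 + h1, by linear_combination h0⟩

/-- Five functionals on `D(𝒜₉₃)` that factor through the fibre at `basePoint`. -/
noncomputable def fibreMap : derivModule A93 →ₛₗ[eval basePoint] (Fin 5 → ℂ) where
  toFun θ := ![eval basePoint (quotA93 2 θ), eval basePoint (quotA93 3 θ),
    eval basePoint (pderiv 0 (quotA93 2 θ - quotA93 7 θ)),
    eval basePoint (pderiv 0 (quotA93 2 θ - quotA93 7 θ) + pderiv 1 (quotA93 2 θ - quotA93 7 θ)),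
    eval basePoint (pderiv 0 (quotA93 5 θ - quotA93 7 θ) + pderiv 1 (quotA93 5 θ - quotA93 7 θ))]
  map_add' θ η := by
    ext i
    fin_cases i <;> simp <;> ring
  map_smul' c θ := by
    obtain ⟨h2, h5⟩ := eval_quotA93_sub θ
    rw [map_sub, sub_eq_zero] at h2 h5
    ext i
    fin_cases i <;> simp [h2, h5] <;> ring

/-- Derivations of `𝒜₉₃` whose values under `fibreMap` are linearly independent: the Euler
derivation, and `x y w (x + y)` times local generators at `basePoint`. -/
noncomputable def testDer : Fin 5 → Fin 4 → S4 :=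
  let q : S4 := X 0 * X 1 * X 3 * (X 0 + X 1)
  let a : S4 := X 2
  let b : S4 := X 0 - X 1 + X 2
  let c : S4 := X 1 - X 2 - X 3
  ![![X 0, X 1, X 2, X 3], ![q, q, 0, q], ![-(q * a * b), q * a * b, q * a * b, 0],
    ![-(q * a * c), 0, q * a * c, 0], ![0, -(q * b * c), 0, 0]]

/-- The quotients of `testDer` by the defining forms. -/
noncomputable def testQuot : Fin 5 → Fin 8 → S4 :=
  let x : S4 := X 0
  let y : S4 := X 1
  let w : S4 := X 3
  let q : S4 := x * y * w * (x + y)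
  let a : S4 := X 2
  let b : S4 := X 0 - X 1 + X 2
  let c : S4 := X 1 - X 2 - X 3
  ![fun _ => 1,
    ![y * w * (x + y), x * w * (x + y), 0, x * y * (x + y), 2 * x * y * w, 0, 0, 0],
    ![-(y * w * (x + y) * a * b), x * w * (x + y) * a * b, q * b, 0, 0, -(q * a), 0, 0],
    ![-(y * w * (x + y) * a * c), 0, q * c, 0, -(x * y * w * a * c), 0, -(q * a), 0],
    ![0, -(x * w * (x + y) * b * c), 0, 0, -(x * y * w * b * c), q * c, -(q * b), 0]]

theorem derMap_testDer (j : Fin 5) (H : Fin 8) :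
    derMap (linForm (A93 H)) (testDer j) = testQuot j H * linForm (A93 H) := by
  rw [derMap_linForm]
  fin_cases j <;> fin_cases H <;>
    simp [-mul_eq_mul_left_iff, -mul_eq_mul_right_iff, linForm, A93, testDer, testQuot,
      Fin.sum_univ_four] <;> ring

theorem testDer_mem (j : Fin 5) : testDer j ∈ derivModule A93 :=
  mem_derivModule_of_eq_mul (testQuot j) (derMap_testDer j)

theorem quotA93_testDer (j : Fin 5) (H : Fin 8) :
    quotA93 H ⟨testDer j, testDer_mem j⟩ = testQuot j H :=
  quotMap_eq_of_eq_mul (A93_ne_zero H) (derMap_testDer j H)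

theorem fibreMap_testDer (j : Fin 5) :
    fibreMap ⟨testDer j, testDer_mem j⟩ =
      (![![1, 1, 0, 0, 0], ![0, 2, 0, 0, 0], ![0, 0, 2, 0, 0], ![0, 0, 0, 2, 0],
        ![0, 0, 0, 0, 2]] : Fin 5 → Fin 5 → ℂ) j := by
  simp only [fibreMap, LinearMap.coe_mk, AddHom.coe_mk, quotA93_testDer]
  ext i
  fin_cases j <;> fin_cases i <;>
    simp [testQuot, basePoint, pderiv_X] <;> norm_num

/-- The derivation module of 𝒜₉₃ is not a free `S`-module. -/
theorem not_free_A93 : ¬ Module.Free S4 ↥(derivModule A93) := by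
  refine not_free_of_linearIndependent fibreMap (fun j => ⟨testDer j, testDer_mem j⟩) ?_
  rw [Fintype.linearIndependent_iff]
  intro g hg
  simp only [Function.comp_apply, fibreMap_testDer] at hg
  have h0 := congrFun hg 0
  have h1 := congrFun hg 1
  have h2 := congrFun hg 2
  have h3 := congrFun hg 3
  have h4 := congrFun hg 4
  simp [Fin.sum_univ_five] at h0 h1 h2 h3 h4
  intro i
  fin_cases i <;> simp_all
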